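/- Fix a function g : ℕ → ℝ_{>0}. There exists a rate function u such that the stationary distribution corresponding to u in the PALRMP (for any fixed q ≥ 0, q ≠ 1) is factorised with one-point function f(x,n) = x^n·g(n); moreover this rate function u is unique up to multiplication by a positive constant. -/

import Mathlib

open scoped Classical

namespace LRMP

/-- A rate function: `u m n` is positive when the departure site is occupied
(`m ≥ 1`) and zero when it is empty (`m = 0`). -/
def IsRate (u : ℕ → ℕ → ℝ) : Prop :=
  (∀ m n : ℕ, 1 ≤ m → 0 < u m n) ∧ ∀ n : ℕ, u 0 n = 0

/-- The configuration `η^{k,ℓ}`: one particle moved from site `k` to site `ℓ`. -/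
def move (L : ℕ) (η : ZMod L → ℕ) (k ℓ : ZMod L) : ZMod L → ℕ :=
  fun a => if a = k then η a - 1 else if a = ℓ then η a + 1 else η a

/-- Every site strictly between `k` and `ℓ`, moving clockwise from `k`, is empty in `η`. -/
def RightClear (L : ℕ) (η : ZMod L → ℕ) (k ℓ : ZMod L) : Prop :=
  ∀ i : ℕ, 0 < i → i < (ℓ - k).val → η (k + (i : ZMod L)) = 0

/-- Every site strictly between `k` and `ℓ`, moving counterclockwise from `k`, is empty in `η`. -/
def LeftClear (L : ℕ) (η : ZMod L → ℕ) (k ℓ : ZMod L) : Prop :=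
  ∀ i : ℕ, 0 < i → i < (k - ℓ).val → η (k - (i : ZMod L)) = 0

/-- The total rate of the transition `η → η^{k,ℓ}` in the PALRMP with rate function `u`,
rate parameters `x` and asymmetry parameter `q`: a clockwise (right) hop contributes
`x ℓ * u (η k) (η ℓ)` and a counterclockwise (left) hop contributes `q * x ℓ * u (η k) (η ℓ)`. -/
noncomputable def hopRate (L : ℕ) (u : ℕ → ℕ → ℝ) (x : ZMod L → ℝ) (q : ℝ)
    (η : ZMod L → ℕ) (k ℓ : ZMod L) : ℝ :=
  (if k ≠ ℓ ∧ 1 ≤ η k ∧ RightClear L η k ℓ then x ℓ * u (η k) (η ℓ) else 0) +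
  (if k ≠ ℓ ∧ 1 ≤ η k ∧ LeftClear L η k ℓ then q * (x ℓ * u (η k) (η ℓ)) else 0)

/-- The incoming probability current into `η`: the sum over pairs `(k, ℓ)` of the
probability current due to the transition into `η` in which a particle moves from
site `k` to site `ℓ` (coming from the configuration `η^{ℓ,k} = move L η ℓ k`). -/
noncomputable def inflow (L : ℕ) [NeZero L] (u : ℕ → ℕ → ℝ) (x : ZMod L → ℝ) (q : ℝ)
    (π : (ZMod L → ℕ) → ℝ) (η : ZMod L → ℕ) : ℝ :=
  ∑ k : ZMod L, ∑ ℓ : ZMod L,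
    if 1 ≤ η ℓ then π (move L η ℓ k) * hopRate L u x q (move L η ℓ k) k ℓ else 0

/-- The outgoing probability current out of `η`. -/
noncomputable def outflow (L : ℕ) [NeZero L] (u : ℕ → ℕ → ℝ) (x : ZMod L → ℝ) (q : ℝ)
    (π : (ZMod L → ℕ) → ℝ) (η : ZMod L → ℕ) : ℝ :=
  ∑ k : ZMod L, ∑ ℓ : ZMod L, π η * hopRate L u x q η k ℓ

/-- `π` satisfies the master (balance) equation of the PALRMP on `Ω_{L,N}`:
for every configuration `η` with `N` particles, the incoming probability current
equals the outgoing probability current. -/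
def IsStationary (L : ℕ) [NeZero L] (N : ℕ) (u : ℕ → ℕ → ℝ) (x : ZMod L → ℝ) (q : ℝ)
    (π : (ZMod L → ℕ) → ℝ) : Prop :=
  ∀ η : ZMod L → ℕ, (∑ a, η a) = N → inflow L u x q π η = outflow L u x q π η

/-- The stationary distribution corresponding to the rate `u` in the PALRMP with
asymmetry parameter `q` is factorised, with one-point function `f`: for every
`L ≥ 2`, `N ≥ 1` and all positive rate parameters `x`, the factorised distribution
`η ↦ ∏_ℓ f (x ℓ) (η ℓ)` (up to normalisation) is stationary. -/
def FactorisedPALRMP (u : ℕ → ℕ → ℝ) (q : ℝ) (f : ℝ → ℕ → ℝ) : Prop :=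
  (∀ (x : ℝ) (n : ℕ), 0 < x → 0 < f x n) ∧
  ∀ (L N : ℕ) [NeZero L], 2 ≤ L → 1 ≤ N →
    ∀ x : ZMod L → ℝ, (∀ ℓ, 0 < x ℓ) →
      IsStationary L N u x q (fun η => ∏ ℓ, f (x ℓ) (η ℓ))

/-- The stationary distribution corresponding to the rate `u` in the homogeneous
PALRMP (all rate parameters equal to `1`) with asymmetry parameter `q` is factorised,
with one-point function `f`. -/
def FactorisedHomog (u : ℕ → ℕ → ℝ) (q : ℝ) (f : ℕ → ℝ) : Prop :=
  (∀ n : ℕ, 0 < f n) ∧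
  ∀ (L N : ℕ) [NeZero L], 2 ≤ L → 1 ≤ N →
    IsStationary L N u (fun _ => (1 : ℝ)) q (fun η => ∏ ℓ, f (η ℓ))

end LRMP

namespace LRMP

/-!
Divide the balance equation at `η` by `π η`. As `f (x, n) = x ^ n * g n`, the term of a hop between
`k` and `ℓ` with target `k` then carries the factor `x k` on both sides. Both sides are therefore
linear forms in the rate parameters, with coefficients that do not involve them, and stationarity
for all `x` is the equality of the coefficients at every site.

For three sites with occupations `a, b, c`, where `b, c ≥ 1`, the equality at the first site reads
`w a b + q * w a c = u c a + q * u b a`, with `w` the weighted rate of an incoming hop. Combining it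
with the same equality for `b` and `c` exchanged gives `w a b = u c a` when `q ^ 2 ≠ 1`. This makes
`u m n` proportional to `g (n + 1) / g n`. Conversely, for this rate all hops with the same target
have the same weight, and the equality of the coefficients says that a site sees as many occupied
sites to its right as to its left.
-/

lemma eq_of_forall_pos_sum_mul_eq {ι R : Type*} [Fintype ι] [Ring R] [PartialOrder R]
    [IsStrictOrderedRing R] {A B : ι → R}
    (h : ∀ x : ι → R, (∀ i, 0 < x i) → ∑ i, x i * A i = ∑ i, x i * B i) : A = B := by
  ext k
  have hone := h 1 fun _ => one_pos
  have hbump := h (fun i => 1 + if i = k then 1 else 0) fun i => by positivity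
  simp only [Pi.one_apply, add_mul, one_mul, Finset.sum_add_distrib, ite_mul, zero_mul,
    Finset.sum_ite_eq', Finset.mem_univ, if_true] at hone hbump
  exact add_left_cancel (hone ▸ hbump)

section Neighbours

open scoped Pointwise

variable {L : ℕ} {η : ZMod L → ℕ} {k ℓ : ZMod L}

lemma leftClear_iff_rightClear_neg :
    LeftClear L η k ℓ ↔ RightClear L (fun a => η (-a)) (-k) (-ℓ) := by
  simp only [LeftClear, RightClear, neg_sub_neg, neg_add, neg_neg, ← sub_eq_add_neg]

variable [NeZero L]

/-- The occupied sites other than `k` that are visible from `k` in the clockwise direction: the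
nearest one, or none if all other sites are empty. -/
noncomputable def rightNeighbours (η : ZMod L → ℕ) (k : ZMod L) : Finset (ZMod L) :=
  {ℓ | ℓ ≠ k ∧ 1 ≤ η ℓ ∧ RightClear L η k ℓ}

/-- The occupied sites other than `k` that are visible from `k` in the counterclockwise direction:
the nearest one, or none if all other sites are empty. -/
noncomputable def leftNeighbours (η : ZMod L → ℕ) (k : ZMod L) : Finset (ZMod L) :=
  {ℓ | ℓ ≠ k ∧ 1 ≤ η ℓ ∧ LeftClear L η k ℓ}

lemma mem_rightNeighbours :
    ℓ ∈ rightNeighbours η k ↔ ℓ ≠ k ∧ 1 ≤ η ℓ ∧ RightClear L η k ℓ := by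
  simp [rightNeighbours]

lemma mem_leftNeighbours :
    ℓ ∈ leftNeighbours η k ↔ ℓ ≠ k ∧ 1 ≤ η ℓ ∧ LeftClear L η k ℓ := by
  simp [leftNeighbours]

lemma rightClear_iff_forall_val_sub_le :
    RightClear L η k ℓ ↔ ∀ m, m ≠ k → 1 ≤ η m → (ℓ - k).val ≤ (m - k).val := by
  constructor
  · intro hclear m hmk hm
    by_contra! hlt
    have hempty := hclear (m - k).val (ZMod.val_pos.2 (sub_ne_zero.2 hmk)) hlt
    rw [ZMod.natCast_zmod_val, add_sub_cancel] at hempty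
    lia
  · intro hnear i hi hlt
    have hval : (i : ZMod L).val = i := ZMod.val_cast_of_lt (hlt.trans (ZMod.val_lt _))
    have hne : k + (i : ZMod L) ≠ k := by
      rw [Ne, add_eq_left, ← ZMod.val_eq_zero, hval]
      exact hi.ne'
    by_contra hocc
    have hle := hnear _ hne (Nat.one_le_iff_ne_zero.2 hocc)
    rw [add_sub_cancel_left, hval] at hle
    lia

lemma rightClear_congr {η' : ZMod L → ℕ} (h : ∀ m, m ≠ k → m ≠ ℓ → η m = η' m) :
    RightClear L η k ℓ ↔ RightClear L η' k ℓ := by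
  simp only [rightClear_iff_forall_val_sub_le]
  refine forall_congr' fun m => forall_congr' fun hmk => ?_
  rcases eq_or_ne m ℓ with rfl | hmℓ
  · simp
  · rw [h m hmk hmℓ]

lemma leftClear_iff_rightClear_swap : LeftClear L η k ℓ ↔ RightClear L η ℓ k := by
  have hcast (i : ℕ) (hi : i < (k - ℓ).val) : (((k - ℓ).val - i : ℕ) : ZMod L) = k - ℓ - i := by
    rw [Nat.cast_sub hi.le, ZMod.natCast_zmod_val]
  constructor <;> intro hclear i hi hlt
  · have := hclear ((k - ℓ).val - i) (by lia) (by lia)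
    rwa [hcast i hlt, show k - (k - ℓ - i) = ℓ + i by ring] at this
  · have := hclear ((k - ℓ).val - i) (by lia) (by lia)
    rwa [hcast i hlt, show ℓ + (k - ℓ - i) = k - i by ring] at this

lemma rightClear_move : RightClear L (move L η ℓ k) k ℓ ↔ RightClear L η k ℓ :=
  rightClear_congr fun m hmk hmℓ => by simp [move, hmk, hmℓ]

lemma leftClear_move : LeftClear L (move L η ℓ k) k ℓ ↔ LeftClear L η k ℓ := by
  simp only [leftClear_iff_rightClear_swap]
  exact rightClear_congr fun m hmℓ hmk => by simp [move, hmk, hmℓ]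

lemma leftNeighbours_eq_neg_rightNeighbours :
    leftNeighbours η k = -rightNeighbours (fun a => η (-a)) (-k) := by
  ext ℓ
  simp [mem_leftNeighbours, mem_rightNeighbours, leftClear_iff_rightClear_neg]

lemma rightNeighbours_eq_singleton_of_mem (hℓ : ℓ ∈ rightNeighbours η k) :
    rightNeighbours η k = {ℓ} := by
  refine Finset.eq_singleton_iff_unique_mem.2 ⟨hℓ, fun m hm => ?_⟩
  rw [mem_rightNeighbours, rightClear_iff_forall_val_sub_le] at hℓ hm
  exact sub_left_injective <| ZMod.val_injective L <|
    (hm.2.2 ℓ hℓ.1 hℓ.2.1).antisymm (hℓ.2.2 m hm.1 hm.2.1)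

lemma rightNeighbours_nonempty_iff : (rightNeighbours η k).Nonempty ↔ ∃ ℓ ≠ k, 1 ≤ η ℓ := by
  constructor
  · rintro ⟨ℓ, hℓ⟩
    obtain ⟨hne, hocc, -⟩ := mem_rightNeighbours.1 hℓ
    exact ⟨ℓ, hne, hocc⟩
  · rintro ⟨m, hmk, hm⟩
    obtain ⟨ℓ, hℓ, hmin⟩ := Finset.exists_min_image {ℓ | ℓ ≠ k ∧ 1 ≤ η ℓ}
      (fun ℓ : ZMod L => (ℓ - k).val) ⟨m, by simp [hmk, hm]⟩
    simp only [Finset.mem_filter_univ, and_imp] at hℓ hmin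
    exact ⟨ℓ, mem_rightNeighbours.2 ⟨hℓ.1, hℓ.2, rightClear_iff_forall_val_sub_le.2 hmin⟩⟩

lemma card_rightNeighbours_le_one : (rightNeighbours η k).card ≤ 1 := by
  rcases (rightNeighbours η k).eq_empty_or_nonempty with h | ⟨ℓ, hℓ⟩
  · simp [h]
  · rw [rightNeighbours_eq_singleton_of_mem hℓ, Finset.card_singleton]

lemma card_leftNeighbours : (leftNeighbours η k).card = (rightNeighbours η k).card := by
  have hreflect : (rightNeighbours (fun a => η (-a)) (-k)).Nonempty ↔
      (rightNeighbours η k).Nonempty := by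
    simp only [rightNeighbours_nonempty_iff]
    exact (Equiv.neg (ZMod L)).exists_congr fun ℓ => by simp [neg_eq_iff_eq_neg]
  rw [← Finset.card_pos, ← Finset.card_pos] at hreflect
  have hle := card_rightNeighbours_le_one (η := fun a => η (-a)) (k := -k)
  have hle' := card_rightNeighbours_le_one (η := η) (k := k)
  rw [leftNeighbours_eq_neg_rightNeighbours, Finset.card_neg]
  lia

lemma rightNeighbours_eq_singleton_add_one (hL : 2 ≤ L) (h : 1 ≤ η (k + 1)) :
    rightNeighbours η k = {k + 1} := by
  have : Fact (1 < L) := ⟨hL⟩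
  refine rightNeighbours_eq_singleton_of_mem <|
    mem_rightNeighbours.2 ⟨by simp, h, fun i hi hlt => ?_⟩
  rw [add_sub_cancel_left, ZMod.val_one] at hlt
  lia

lemma leftNeighbours_eq_singleton_sub_one (hL : 2 ≤ L) (h : 1 ≤ η (k - 1)) :
    leftNeighbours η k = {k - 1} := by
  have hneg : -(-k + 1) = k - 1 := by ring
  rw [leftNeighbours_eq_neg_rightNeighbours,
    rightNeighbours_eq_singleton_add_one hL (by rwa [hneg]), Finset.neg_singleton, hneg]

end Neighbours

/-- The factorised distribution with one-point function `f (x, n) = x ^ n * g n`, without its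
normalisation. -/
noncomputable def productWeight {L : ℕ} [NeZero L] (g : ℕ → ℝ) (x : ZMod L → ℝ)
    (η : ZMod L → ℕ) : ℝ :=
  ∏ a, (x a ^ η a * g (η a))

/-- The rate of a hop into a configuration with `a` particles at the target site and `b` at the
departure site, multiplied by the quotient of the products of `g` before and after the hop. It is
meaningful for `b ≥ 1` only. -/
noncomputable def incomingRate (g : ℕ → ℝ) (u : ℕ → ℕ → ℝ) (a b : ℕ) : ℝ :=
  g (a + 1) * g (b - 1) / (g a * g b) * u (a + 1) (b - 1)

/-- The coefficient of `x k` in the incoming current into `η` divided by the weight of `η`. -/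
noncomputable def inflowCoeff {L : ℕ} [NeZero L] (g : ℕ → ℝ) (u : ℕ → ℕ → ℝ) (q : ℝ)
    (η : ZMod L → ℕ) (k : ZMod L) : ℝ :=
  ∑ ℓ ∈ rightNeighbours η k, incomingRate g u (η k) (η ℓ) +
    q * ∑ ℓ ∈ leftNeighbours η k, incomingRate g u (η k) (η ℓ)

/-- The coefficient of `x k` in the outgoing current out of `η` divided by the weight of `η`.
A clockwise hop to `k` starts from the left neighbour of `k`. -/
noncomputable def outflowCoeff {L : ℕ} [NeZero L] (u : ℕ → ℕ → ℝ) (q : ℝ)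
    (η : ZMod L → ℕ) (k : ZMod L) : ℝ :=
  ∑ ℓ ∈ leftNeighbours η k, u (η ℓ) (η k) + q * ∑ ℓ ∈ rightNeighbours η k, u (η ℓ) (η k)

section Balance

variable {L : ℕ} [NeZero L] {g : ℕ → ℝ} {u : ℕ → ℕ → ℝ} {x : ZMod L → ℝ} {q : ℝ}
  {η : ZMod L → ℕ}

lemma productWeight_pos (hg : ∀ n, 0 < g n) (hx : ∀ ℓ, 0 < x ℓ) : 0 < productWeight g x η :=
  Finset.prod_pos fun a _ => mul_pos (pow_pos (hx a) _) (hg _)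

lemma productWeight_move_mul_rate (hg : ∀ n, g n ≠ 0) {k ℓ : ZMod L} (hne : ℓ ≠ k)
    (hocc : 1 ≤ η ℓ) :
    productWeight g x (move L η ℓ k) * (x ℓ * u (η k + 1) (η ℓ - 1)) =
      productWeight g x η * (x k * incomingRate g u (η k) (η ℓ)) := by
  have hsplit (ζ : ZMod L → ℕ) : productWeight g x ζ =
      (x ℓ ^ ζ ℓ * g (ζ ℓ)) * ((x k ^ ζ k * g (ζ k)) *
        ∏ a ∈ (Finset.univ.erase ℓ).erase k, (x a ^ ζ a * g (ζ a))) := by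
    rw [productWeight, ← Finset.mul_prod_erase _ _ (Finset.mem_univ ℓ),
      ← Finset.mul_prod_erase _ _ (Finset.mem_erase.2 ⟨hne.symm, Finset.mem_univ k⟩)]
  have hrest : ∏ a ∈ (Finset.univ.erase ℓ).erase k,
      (x a ^ move L η ℓ k a * g (move L η ℓ k a)) =
      ∏ a ∈ (Finset.univ.erase ℓ).erase k, (x a ^ η a * g (η a)) := by
    refine Finset.prod_congr rfl fun a ha => ?_
    simp only [Finset.mem_erase] at ha
    simp [move, ha.1, ha.2.1]
  obtain ⟨n, hn⟩ := Nat.exists_eq_add_of_le' hocc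
  have hk := hg (η k)
  have hℓ := hg (n + 1)
  rw [hsplit, hsplit, hrest]
  simp only [incomingRate, move, hne.symm, hn, if_true, if_false, Nat.add_sub_cancel]
  field_simp
  ring

lemma inflow_productWeight (hg : ∀ n, g n ≠ 0) :
    inflow L u x q (productWeight g x) η =
      productWeight g x η * ∑ k, x k * inflowCoeff g u q η k := by
  simp only [inflow, inflowCoeff, rightNeighbours, leftNeighbours, Finset.sum_filter,
    Finset.mul_sum, ← Finset.sum_add_distrib]
  refine Finset.sum_congr rfl fun k _ => Finset.sum_congr rfl fun ℓ _ => ?_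
  rcases eq_or_ne ℓ k with rfl | hne
  · simp [hopRate]
  by_cases hocc : 1 ≤ η ℓ
  · have hhop := productWeight_move_mul_rate (u := u) (x := x) hg hne hocc
    have hℓ : move L η ℓ k ℓ = η ℓ - 1 := by simp [move]
    have hk : move L η ℓ k k = η k + 1 := by simp [move, hne.symm]
    simp only [hopRate, rightClear_move, leftClear_move, hℓ, hk, hne, hne.symm, hocc,
      ne_eq, not_false_eq_true, true_and, if_true, Nat.le_add_left]
    split_ifs
    · linear_combination (1 + q) * hhop
    · linear_combination hhop
    · linear_combination q * hhop
    · ring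
  · simp [hocc]

lemma outflow_eq_mul_sum_outflowCoeff (π : (ZMod L → ℕ) → ℝ) :
    outflow L u x q π η = π η * ∑ k, x k * outflowCoeff u q η k := by
  simp only [outflow, outflowCoeff, rightNeighbours, leftNeighbours, Finset.sum_filter,
    Finset.mul_sum, ← Finset.sum_add_distrib]
  rw [Finset.sum_comm]
  refine Finset.sum_congr rfl fun k _ => Finset.sum_congr rfl fun ℓ _ => ?_
  simp only [hopRate, leftClear_iff_rightClear_swap]
  split_ifs <;> ring

lemma inflow_eq_outflow_iff (hg : ∀ n, 0 < g n) (hx : ∀ ℓ, 0 < x ℓ) :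
    inflow L u x q (productWeight g x) η = outflow L u x q (productWeight g x) η ↔
      ∑ k, x k * inflowCoeff g u q η k = ∑ k, x k * outflowCoeff u q η k := by
  rw [inflow_productWeight fun n => (hg n).ne', outflow_eq_mul_sum_outflowCoeff]
  exact mul_right_inj' (productWeight_pos hg hx).ne'

end Balance

section Factorised

variable {g : ℕ → ℝ} {u : ℕ → ℕ → ℝ} {q : ℝ}

lemma factorisedPALRMP_iff_coeff_eq (hg : ∀ n, 0 < g n) :
    FactorisedPALRMP u q (fun x n => x ^ n * g n) ↔
      ∀ (L : ℕ) [NeZero L], 2 ≤ L → ∀ η : ZMod L → ℕ, 1 ≤ ∑ a, η a →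
        inflowCoeff g u q η = outflowCoeff u q η := by
  constructor
  · intro hfact L _ hL η hη
    exact eq_of_forall_pos_sum_mul_eq fun x hx =>
      (inflow_eq_outflow_iff hg hx).1 (hfact.2 L _ hL hη x hx η rfl)
  · refine fun hcoeff => ⟨fun x n hx => mul_pos (pow_pos hx n) (hg n), ?_⟩
    intro L N _ hL hN x hx η hη
    refine (inflow_eq_outflow_iff hg hx).2 ?_
    rw [hcoeff L hL η (hη ▸ hN)]

lemma three_site_balance (hg : ∀ n, 0 < g n)
    (hfact : FactorisedPALRMP u q (fun x n => x ^ n * g n)) (a : ℕ) {b c : ℕ}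
    (hb : 1 ≤ b) (hc : 1 ≤ c) :
    incomingRate g u a b + q * incomingRate g u a c = u c a + q * u b a := by
  let η : ZMod 3 → ℕ := fun i => if i = 0 then a else if i = 1 then b else c
  have hη0 : η 0 = a := rfl
  have hη1 : η (0 + 1) = b := rfl
  have hη2 : η (0 - 1) = c := rfl
  have hpos : 1 ≤ ∑ i, η i :=
    hb.trans (hη1 ▸ Finset.single_le_sum (fun i _ => Nat.zero_le (η i)) (Finset.mem_univ _))
  have hcoeff := congrFun ((factorisedPALRMP_iff_coeff_eq hg).1 hfact 3 (by simp) η hpos) 0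
  simpa only [inflowCoeff, outflowCoeff, Finset.sum_singleton, hη0, hη1, hη2,
    rightNeighbours_eq_singleton_add_one (by simp : 2 ≤ 3) (hη1 ▸ hb : 1 ≤ η (0 + 1)),
    leftNeighbours_eq_singleton_sub_one (by simp : 2 ≤ 3) (hη2 ▸ hc : 1 ≤ η (0 - 1))] using hcoeff

lemma incomingRate_eq_rate (hg : ∀ n, 0 < g n) (hq : q ^ 2 ≠ 1)
    (hfact : FactorisedPALRMP u q (fun x n => x ^ n * g n)) (a : ℕ) {b c : ℕ}
    (hb : 1 ≤ b) (hc : 1 ≤ c) :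
    incomingRate g u a b = u c a := by
  have hbc := three_site_balance hg hfact a hb hc
  have hcb := three_site_balance hg hfact a hc hb
  refine mul_left_cancel₀ (sub_ne_zero.2 hq) ?_
  linear_combination q * hcb - hbc

lemma rate_eq_of_factorisedPALRMP (hg : ∀ n, 0 < g n) (hq : q ^ 2 ≠ 1)
    (hfact : FactorisedPALRMP u q (fun x n => x ^ n * g n)) {m : ℕ} (hm : 1 ≤ m) (n : ℕ) :
    u m n = u 1 0 * g 0 / g 1 * (g (n + 1) / g n) := by
  have hfirst : u (n + 1) 0 = incomingRate g u 0 1 :=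
    (incomingRate_eq_rate hg hq hfact 0 le_rfl n.succ_pos).symm
  have h0 := (hg 0).ne'
  have h1 := (hg 1).ne'
  have hn := (hg n).ne'
  calc u m n = incomingRate g u n 1 := (incomingRate_eq_rate hg hq hfact n le_rfl hm).symm
    _ = g (n + 1) * g 0 / (g n * g 1) * u (n + 1) 0 := rfl
    _ = g (n + 1) * g 0 / (g n * g 1) * (g 1 * g 0 / (g 0 * g 1) * u 1 0) := by
      rw [hfirst]; rfl
    _ = u 1 0 * g 0 / g 1 * (g (n + 1) / g n) := by field_simp

end Factorised

/-- The rate function, depending on the occupation of the target site only, whose stationary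
distribution has the one-point function `f (x, n) = x ^ n * g n`. -/
noncomputable def targetRate (g : ℕ → ℝ) (m n : ℕ) : ℝ :=
  if m = 0 then 0 else g (n + 1) / g n

section TargetRate

variable {g : ℕ → ℝ}

lemma targetRate_of_one_le {m : ℕ} (hm : 1 ≤ m) (n : ℕ) : targetRate g m n = g (n + 1) / g n :=
  if_neg (Nat.one_le_iff_ne_zero.1 hm)

lemma isRate_targetRate (hg : ∀ n, 0 < g n) : IsRate (targetRate g) :=
  ⟨fun _ n hm => targetRate_of_one_le hm n ▸ div_pos (hg _) (hg n), fun _ => if_pos rfl⟩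

lemma incomingRate_targetRate (hg : ∀ n, g n ≠ 0) (a : ℕ) {b : ℕ} (hb : 1 ≤ b) :
    incomingRate g (targetRate g) a b = g (a + 1) / g a := by
  obtain ⟨n, rfl⟩ := Nat.exists_eq_add_of_le' hb
  have hn := hg n
  have hn' := hg (n + 1)
  have ha := hg a
  rw [incomingRate, targetRate_of_one_le a.succ_pos, Nat.add_sub_cancel]
  field_simp

lemma inflowCoeff_targetRate_eq_outflowCoeff {L : ℕ} [NeZero L] (hg : ∀ n, g n ≠ 0) (q : ℝ)
    (η : ZMod L → ℕ) (k : ZMod L) :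
    inflowCoeff g (targetRate g) q η k = outflowCoeff (targetRate g) q η k := by
  have hright (ℓ) (hℓ : ℓ ∈ rightNeighbours η k) : 1 ≤ η ℓ := (mem_rightNeighbours.1 hℓ).2.1
  have hleft (ℓ) (hℓ : ℓ ∈ leftNeighbours η k) : 1 ≤ η ℓ := (mem_leftNeighbours.1 hℓ).2.1
  rw [inflowCoeff, outflowCoeff,
    Finset.sum_congr rfl fun ℓ hℓ => incomingRate_targetRate hg (η k) (hright ℓ hℓ),
    Finset.sum_congr rfl fun ℓ hℓ => incomingRate_targetRate hg (η k) (hleft ℓ hℓ),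
    Finset.sum_congr rfl fun ℓ hℓ => targetRate_of_one_le (hleft ℓ hℓ) (η k),
    Finset.sum_congr rfl fun ℓ hℓ => targetRate_of_one_le (hright ℓ hℓ) (η k)]
  simp only [Finset.sum_const, card_leftNeighbours]

lemma factorisedPALRMP_targetRate (hg : ∀ n, 0 < g n) (q : ℝ) :
    FactorisedPALRMP (targetRate g) q (fun x n => x ^ n * g n) :=
  (factorisedPALRMP_iff_coeff_eq hg).2 fun _ _ _ η _ =>
    funext (inflowCoeff_targetRate_eq_outflowCoeff (fun n => (hg n).ne') q η)

end TargetRate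

theorem exists_rate_arbitrary_onepoint_general
    (g : ℕ → ℝ) (hg : ∀ n, 0 < g n) (q : ℝ) (hq : q ^ 2 ≠ 1) :
    ∃ u : ℕ → ℕ → ℝ, IsRate u ∧
      FactorisedPALRMP u q (fun x n => x ^ n * g n) ∧
      ∀ u' : ℕ → ℕ → ℝ, IsRate u' →
        FactorisedPALRMP u' q (fun x n => x ^ n * g n) →
        ∃ a : ℝ, 0 < a ∧ ∀ m n : ℕ, u' m n = a * u m n := by
  refine ⟨targetRate g, isRate_targetRate hg, factorisedPALRMP_targetRate hg q, ?_⟩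
  intro u' hu' hfact
  refine ⟨u' 1 0 * g 0 / g 1, div_pos (mul_pos (hu'.1 1 0 le_rfl) (hg 0)) (hg 1), fun m n => ?_⟩
  rcases m.eq_zero_or_pos with rfl | hm
  · rw [hu'.2 n, (isRate_targetRate hg).2 n, mul_zero]
  · rw [rate_eq_of_factorisedPALRMP hg hq hfact hm, targetRate_of_one_le hm]

/-- for every `g : ℕ → ℝ_{>0}` there is a rate function `u`, unique up to
a positive constant factor, whose stationary distribution in the PALRMP is factorised
with one-point function `f (x, n) = x ^ n * g n`. -/
theorem exists_rate_arbitrary_onepoint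
    (g : ℕ → ℝ) (hg : ∀ n, 0 < g n)
    (q : ℝ) (hq : 0 ≤ q) (hq1 : q ≠ 1) :
    ∃ u : ℕ → ℕ → ℝ, IsRate u ∧
      FactorisedPALRMP u q (fun x n => x ^ n * g n) ∧
      ∀ u' : ℕ → ℕ → ℝ, IsRate u' →
        FactorisedPALRMP u' q (fun x n => x ^ n * g n) →
        ∃ a : ℝ, 0 < a ∧ ∀ m n : ℕ, u' m n = a * u m n :=
  exists_rate_arbitrary_onepoint_general g hg q <|
    (pow_eq_one_iff_of_nonneg hq two_ne_zero).not.2 hq1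

end LRMP
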